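/- The Star STS instance is a YES instance if and only if the constructed weighted token swapping instance admits a swap sequence of total cost at most K that transforms the initial token placement into the target token placement. -/

import Mathlib

/-!
STATEMENT 2: The Star STS instance is a YES instance iff the constructed *weighted*
token swapping instance admits a swap sequence of total cost at most `K`.

Star STS data: `m` slots (`Fin m`), items `0,…,m` encoded as `Option (Fin m)` with
`none` = item 0 (initially at the center), target permutation `π` on items, swap
sequence `s : Fin n → Fin m` in which every slot occurs and no slot occurs twice
consecutively.

Constructed tree: a root; an ordering gadget (path of `n` vertices); `m` slot gadgets,
slot gadget `i` being a path of `nᵢ` vertices (`nᵢ` = number of occurrences of slot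
`i`) together with a nook leaf attached to the path vertex adjacent to the root.
Weight-0 item tokens sit at the root/nooks exactly as the items of the Star STS
instance; weight-1 tokens `x₁,…,xₙ` start on the ordering path (`x₁` nearest the
root), the targets of `y₁,…,yₙ` fill the ordering path (`yₙ` nearest the root); if
slot `i` occurs at positions `j₁<…<j_{nᵢ}` then `y_{j₁},…` start on the path of slot
gadget `i` (`y_{j₁}` nearest the root) and the targets of `x_{j₁},…` fill that path in
reverse order (`x_{j_{nᵢ}}` nearest the root).  `K` is the sum over all `xⱼ`, `yⱼ` of
the tree distance between the token's initial and target vertices.  The cost of a swap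
is the sum of the weights of the two swapped tokens.
-/

namespace Stmt2

/-- Vertices of the constructed tree: the root, ordering-gadget vertices `ord d`
(distance `d+1` from the root), slot-gadget path vertices `slot i d` (distance `d+1`
from the root in slot gadget `i`), and nooks.  (Coordinates range over all of `ℕ`;
the graph below only puts edges between the vertices of the construction, so the
remaining vertices are isolated and carry no tokens.) -/
inductive Vtx (m : ℕ) where
  | root : Vtx m
  | ord : ℕ → Vtx m
  | slot : Fin m → ℕ → Vtx m
  | nook : Fin m → Vtx m
deriving DecidableEq

/-- Adjacency generator for the tree: `len i` = length of the path of slot gadget `i`,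
`lenOrd` = length of the ordering path, `nd` = distance from the root of the path
vertex to which the nook of each slot gadget is attached. -/
def rel {m : ℕ} (len : Fin m → ℕ) (lenOrd nd : ℕ) : Vtx m → Vtx m → Prop
  | .root, .ord d => d = 0 ∧ 0 < lenOrd
  | .ord d, .ord d' => d' = d + 1 ∧ d' < lenOrd
  | .root, .slot i d => d = 0 ∧ 0 < len i
  | .slot i d, .slot i' d' => i = i' ∧ d' = d + 1 ∧ d' < len i
  | .slot i d, .nook i' => i = i' ∧ d + 1 = nd ∧ d < len i
  | _, _ => False

/-- The constructed tree, as a simple graph. -/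
def Tree {m : ℕ} (len : Fin m → ℕ) (lenOrd nd : ℕ) : SimpleGraph (Vtx m) :=
  SimpleGraph.fromRel (rel len lenOrd nd)

/-- Swap the two values `e.1`, `e.2`. -/
def swapV {V : Type*} [DecidableEq V] (e : V × V) (v : V) : V :=
  if v = e.1 then e.2 else if v = e.2 then e.1 else v

/-- Apply a sequence of swaps to a token placement (token ↦ vertex). -/
def applySwaps {T V : Type*} [DecidableEq V] (σ : List (V × V)) (f : T → V) : T → V :=
  σ.foldl (fun g e => fun t => swapV e (g t)) f

/-- Apply a sequence of star swaps (each given by a leaf) to a placement on the star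
with center `none` and leaves `some l`. -/
def starApply {L : Type*} [DecidableEq L] (σ : List L) (f : Option L → Option L) :
    Option L → Option L :=
  σ.foldl (fun g l => fun t => swapV ((none : Option L), some l) (g t)) f

/-- The Star STS instance is a YES instance. -/
def StarSTSYes {L : Type*} [DecidableEq L] (π : Equiv.Perm (Option L)) (σ : List L) : Prop :=
  ∃ σ' : List L, σ'.Sublist σ ∧ starApply σ' id = ⇑π

variable {m n : ℕ}

/-- `nᵢ`: the number of occurrences of slot `i` in the swap sequence. -/
def cnt (s : Fin n → Fin m) (i : Fin m) : ℕ :=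
  (Finset.univ.filter fun j : Fin n => s j = i).card

/-- Among the occurrences of the slot `s j`, the rank (number of earlier occurrences)
of position `j`. -/
def rankOcc (s : Fin n → Fin m) (j : Fin n) : ℕ :=
  (Finset.univ.filter fun j' : Fin n => s j' = s j ∧ j'.val < j.val).card

/-- Tokens of the weighted instance: item tokens (`Option (Fin m)`, `none` = item 0),
and the weight-1 tokens `xⱼ` (`Sum.inl`) and `yⱼ` (`Sum.inr`). -/
abbrev TokW (m n : ℕ) := Option (Fin m) ⊕ (Fin n ⊕ Fin n)

/-- Token weights: item tokens have weight `0`, all `xⱼ`, `yⱼ` have weight `1`. -/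
def wtW : TokW m n → ℕ
  | Sum.inl _ => 0
  | Sum.inr _ => 1

/-- The constructed tree for the weighted instance: ordering path of length `n`,
slot path `i` of length `nᵢ`, nook attached to the path vertex adjacent to the root. -/
def WGraph (s : Fin n → Fin m) : SimpleGraph (Vtx m) := Tree (cnt s) n 1

/-- Initial placement of the tokens. -/
def initW (s : Fin n → Fin m) : TokW m n → Vtx m
  | Sum.inl none => .root
  | Sum.inl (some i) => .nook i
  | Sum.inr (Sum.inl j) => .ord j.val
  | Sum.inr (Sum.inr j) => .slot (s j) (rankOcc s j)

/-- Target placement of the tokens. -/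
def tgtW (s : Fin n → Fin m) (π : Equiv.Perm (Option (Fin m))) : TokW m n → Vtx m
  | Sum.inl o => (match π o with | none => .root | some i => .nook i)
  | Sum.inr (Sum.inl j) => .slot (s j) (cnt s (s j) - 1 - rankOcc s j)
  | Sum.inr (Sum.inr j) => .ord (n - 1 - j.val)

/-- The cost of a swap sequence: each swap costs the sum of the weights of the two
tokens at the endpoints of the swapped edge. -/
def costSeq (wt : TokW m n → ℕ) : List (Vtx m × Vtx m) → (TokW m n → Vtx m) → ℕ
  | [], _ => 0
  | e :: rest, f =>
      (∑ t : TokW m n, if f t = e.1 ∨ f t = e.2 then wt t else 0) +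
        costSeq wt rest (fun t => swapV e (f t))

/-- `K`: the sum over the weight-1 tokens of the distance between initial and target
vertices. -/
noncomputable def KW (s : Fin n → Fin m) (π : Equiv.Perm (Option (Fin m))) : ℕ :=
  ∑ t : Fin n ⊕ Fin n, (WGraph s).dist (initW s (Sum.inr t)) (tgtW s π (Sum.inr t))

/-! ### Helper material -/

theorem adj_iff (s : Fin n → Fin m) (u v : Vtx m) :
    (WGraph s).Adj u v ↔ u ≠ v ∧ (rel (cnt s) n 1 u v ∨ rel (cnt s) n 1 v u) := by
  simp [WGraph, Tree]

/-- Explicit tree distance to a target vertex (first argument) on one of the paths. -/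
def dd : Vtx m → Vtx m → ℕ
  | .slot _ e, .root => e + 1
  | .slot _ e, .ord d => d + e + 2
  | .slot i e, .slot i' d => if i' = i then (d - e) + (e - d) else d + e + 2
  | .slot i e, .nook i' => if i' = i then e + 1 else e + 3
  | .ord e, .root => e + 1
  | .ord e, .ord d => (d - e) + (e - d)
  | .ord e, .slot _ d => d + e + 2
  | .ord e, .nook _ => e + 3
  | _, _ => 0

/-- Clamped coordinate on the ordering path. -/
def posO : Vtx m → ℤ
  | .root => 0
  | .ord d => (d : ℤ) + 1
  | _ => -1

/-- Allowed zone of an `x` token with target `slot i e`. -/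
def ZX (i : Fin m) (e : ℕ) : Vtx m → Prop
  | .root => True
  | .ord _ => True
  | .slot i' d => i' = i ∧ d ≤ e
  | .nook _ => False

/-- Allowed zone of a `y` token with target `ord e`. -/
def ZY (i : Fin m) (e : ℕ) : Vtx m → Prop
  | .root => True
  | .ord d => d ≤ e
  | .slot i' _ => i' = i
  | .nook _ => False

/-- The nook a vertex corresponds to, if any. -/
def nk : Vtx m → Option (Fin m)
  | .nook i => some i
  | _ => none

theorem posO_ge (v : Vtx m) : -1 ≤ posO v := by
  cases v <;> simp [posO]; omega

theorem posO_inj (u v : Vtx m) (h : posO u = posO v) (h0 : posO u ≠ -1) : u = v := by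
  cases u <;> cases v <;> simp [posO] at * <;> omega

theorem dd_lip {s : Fin n → Fin m} {u v : Vtx m} (h : (WGraph s).Adj u v) (T : Vtx m) :
    dd T u ≤ dd T v + 1 := by
  rw [adj_iff] at h
  obtain ⟨-, h⟩ := h
  cases T <;> cases u <;> cases v <;> simp [rel, dd] at * <;> grind

theorem step_ZX {s : Fin n → Fin m} {u v : Vtx m} (h : (WGraph s).Adj u v) {i : Fin m} {e : ℕ}
    (hz : ZX i e u) (hd : dd (.slot i e) v + 1 = dd (.slot i e) u) :
    ZX i e v ∧ posO v ≤ posO u ∧ posO u - 1 ≤ posO v := by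
  rw [adj_iff] at h
  obtain ⟨-, h⟩ := h
  cases u <;> cases v <;> simp [rel, dd, ZX, posO] at * <;> grind

theorem step_ZY {s : Fin n → Fin m} {u v : Vtx m} (h : (WGraph s).Adj u v) {i : Fin m} {e : ℕ}
    (hz : ZY i e u) (hd : dd (.ord e) v + 1 = dd (.ord e) u) :
    ZY i e v ∧ posO u ≤ posO v ∧ posO v - 1 ≤ posO u := by
  rw [adj_iff] at h
  obtain ⟨-, h⟩ := h
  cases u <;> cases v <;> simp [rel, dd, ZY, posO] at * <;> grind

theorem step_ord {u v u' v' : Vtx m} (h : posO u < posO v ∨ posO u = -1)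
    (h1 : posO u' ≤ posO u) (h2 : posO v - 1 ≤ posO v') (h3 : u' ≠ v') :
    posO u' < posO v' ∨ posO u' = -1 := by
  by_contra hc
  push Not at hc
  have := posO_ge u'
  have e : posO u' = posO v' := by omega
  exact h3 (posO_inj _ _ e hc.2)

theorem swapV_swapV {V : Type*} [DecidableEq V] (e : V × V) (v : V) :
    swapV e (swapV e v) = v := by
  unfold swapV; grind

theorem swapV_inj {V : Type*} [DecidableEq V] (e : V × V) : Function.Injective (swapV e) :=
  Function.LeftInverse.injective (swapV_swapV e)

/-! ### Ranks -/

/-- number of occurrences of `i` before time `j` -/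
def rk (s : Fin n → Fin m) (j : ℕ) (i : Fin m) : ℕ :=
  (Finset.univ.filter fun l : Fin n => s l = i ∧ l.val < j).card

theorem rankOcc_eq (s : Fin n → Fin m) (j : Fin n) : rankOcc s j = rk s j.val (s j) := rfl

theorem rk_mono (s : Fin n → Fin m) {j k : ℕ} (h : j ≤ k) (i : Fin m) : rk s j i ≤ rk s k i := by
  apply Finset.card_le_card
  intro l
  simp only [Finset.mem_filter, Finset.mem_univ, true_and]
  omega

theorem rk_le (s : Fin n → Fin m) (j : ℕ) (i : Fin m) : rk s j i ≤ cnt s i := by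
  apply Finset.card_le_card
  intro l
  simp only [Finset.mem_filter, Finset.mem_univ, true_and]
  tauto

theorem rk_succ (s : Fin n → Fin m) (j : Fin n) (i : Fin m) :
    rk s (j.val + 1) i = rk s j.val i + if s j = i then 1 else 0 := by
  unfold rk
  split_ifs with h
  · have : (Finset.univ.filter fun l : Fin n => s l = i ∧ l.val < j.val + 1)
      = insert j (Finset.univ.filter fun l : Fin n => s l = i ∧ l.val < j.val) := by
      ext l
      simp only [Finset.mem_filter, Finset.mem_univ, true_and, Finset.mem_insert]
      constructor
      · rintro ⟨h1, h2⟩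
        by_cases h3 : l.val = j.val
        · exact Or.inl (Fin.ext h3)
        · exact Or.inr ⟨h1, by omega⟩
      · rintro (h1 | ⟨h1, h2⟩)
        · subst h1
          exact ⟨h, by omega⟩
        · exact ⟨h1, by omega⟩
    rw [this, Finset.card_insert_of_notMem (by simp)]
  · rw [add_zero]
    refine congrArg Finset.card ?_
    ext l
    simp only [Finset.mem_filter, Finset.mem_univ, true_and]
    constructor
    · rintro ⟨h1, h2⟩
      refine ⟨h1, ?_⟩
      by_contra h3
      have : l = j := Fin.ext (by omega)
      subst this
      exact h h1
    · rintro ⟨h1, h2⟩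
      exact ⟨h1, by omega⟩

theorem rank_lt_of_lt (s : Fin n → Fin m) {j k : Fin n} (h : j < k) (hs : s j = s k) :
    rankOcc s j < rankOcc s k := by
  rw [rankOcc_eq, rankOcc_eq, hs]
  have h1 := rk_succ s j (s k)
  have h2 := rk_mono s (show j.val + 1 ≤ k.val from h) (s k)
  simp [hs] at h1
  omega

theorem rank_lt_cnt (s : Fin n → Fin m) (j : Fin n) : rankOcc s j < cnt s (s j) := by
  rw [rankOcc_eq]
  have h1 := rk_succ s j (s j)
  have h2 := rk_le s (j.val + 1) (s j)
  simp at h1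
  omega

theorem rank_inj (s : Fin n → Fin m) {j k : Fin n} (hs : s j = s k)
    (h : rankOcc s j = rankOcc s k) : j = k := by
  rcases lt_trichotomy j k with h1 | h1 | h1
  · have := rank_lt_of_lt s h1 hs; omega
  · exact h1
  · have := rank_lt_of_lt s h1 hs.symm; omega

theorem rank_surj (s : Fin n → Fin m) (i : Fin m) (d : ℕ) (hd : d < cnt s i) :
    ∃ j, s j = i ∧ rankOcc s j = d := by
  have h : (Finset.univ.filter fun j : Fin n => s j = i).image (rankOcc s)
      = Finset.range (cnt s i) := by
    apply Finset.eq_of_subset_of_card_le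
    · intro d
      simp only [Finset.mem_image, Finset.mem_filter, Finset.mem_univ, true_and, Finset.mem_range]
      rintro ⟨j, rfl, rfl⟩
      exact rank_lt_cnt s j
    · rw [Finset.card_image_of_injOn, Finset.card_range]
      · rfl
      · intro j hj k hk hjk
        simp at hj hk
        exact rank_inj s (hj.trans hk.symm) hjk
  have : d ∈ Finset.range (cnt s i) := by simpa using hd
  rw [← h] at this
  simpa using this

theorem init_inj (s : Fin n → Fin m) : Function.Injective (initW s) := by
  rintro ((_ | a) | a | a) ((_ | b) | b | b) h <;> simp [initW] at h
  · rfl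
  · rw [h]
  · rw [Fin.ext h]
  · rw [rank_inj s h.1 h.2]

theorem adj_mem {s : Fin n → Fin m} {u v : Vtx m} (h : (WGraph s).Adj u v) :
    ∃ t, initW s t = u := by
  rw [adj_iff] at h
  obtain ⟨-, h⟩ := h
  cases u with
  | root => exact ⟨Sum.inl none, rfl⟩
  | ord d =>
    have : d < n := by cases v <;> simp [rel] at h <;> omega
    exact ⟨Sum.inr (Sum.inl ⟨d, this⟩), rfl⟩
  | slot i d =>
    have : d < cnt s i := by cases v <;> simp [rel] at h <;> grind
    obtain ⟨j, rfl, rfl⟩ := rank_surj s i d this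
    exact ⟨Sum.inr (Sum.inr j), rfl⟩
  | nook i => exact ⟨Sum.inl (some i), rfl⟩

/-! ### Distances -/

theorem walk_ord (s : Fin n → Fin m) (d : ℕ) (h : d < n) :
    ∃ p : (WGraph s).Walk .root (.ord d), p.length = d + 1 := by
  induction d with
  | zero =>
    have : (WGraph s).Adj .root (.ord 0) := by rw [adj_iff]; simp [rel]; omega
    exact ⟨this.toWalk, by simp⟩
  | succ d ih =>
    obtain ⟨p, hp⟩ := ih (by omega)
    have : (WGraph s).Adj (.ord d) (.ord (d+1)) := by rw [adj_iff]; simp [rel]; omega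
    exact ⟨p.concat this, by simp [hp]⟩

theorem walk_slot (s : Fin n → Fin m) (i : Fin m) (d : ℕ) (h : d < cnt s i) :
    ∃ p : (WGraph s).Walk .root (.slot i d), p.length = d + 1 := by
  induction d with
  | zero =>
    have : (WGraph s).Adj .root (.slot i 0) := by rw [adj_iff]; simp [rel]; omega
    exact ⟨this.toWalk, by simp⟩
  | succ d ih =>
    obtain ⟨p, hp⟩ := ih (by omega)
    have : (WGraph s).Adj (.slot i d) (.slot i (d+1)) := by rw [adj_iff]; simp [rel]; omega
    exact ⟨p.concat this, by simp [hp]⟩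

theorem walk_lip {s : Fin n → Fin m} (T : Vtx m) {u v : Vtx m} (p : (WGraph s).Walk u v) :
    dd T u ≤ dd T v + p.length := by
  induction p with
  | nil => simp
  | cons h p ih =>
    have := dd_lip h T
    simp only [SimpleGraph.Walk.length_cons]
    omega

theorem dist_os (s : Fin n → Fin m) (i : Fin m) (d e : ℕ) (h : d < cnt s i) (he : e < n) :
    (WGraph s).dist (.ord e) (.slot i d) = d + e + 2 := by
  obtain ⟨p, hp⟩ := walk_slot s i d h
  obtain ⟨q, hq⟩ := walk_ord s e he
  apply le_antisymm
  · have := (WGraph s).dist_le (q.reverse.append p)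
    simp at this
    omega
  · obtain ⟨r, hr⟩ := SimpleGraph.Reachable.exists_walk_length_eq_dist (q.reverse.append p).reachable
    have := walk_lip (.slot i d) r
    simp [dd] at this
    omega

theorem KW_eq (s : Fin n → Fin m) (π : Equiv.Perm (Option (Fin m))) :
    KW s π = ∑ t : Fin n ⊕ Fin n, dd (tgtW s π (Sum.inr t)) (initW s (Sum.inr t)) := by
  unfold KW
  apply Finset.sum_congr rfl
  rintro (j | j) -
  · have := rank_lt_cnt s j
    simp only [initW, tgtW]
    rw [dist_os s _ _ _ (by omega) j.2]
    simp [dd]; omega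
  · have := rank_lt_cnt s j
    simp only [initW, tgtW]
    rw [SimpleGraph.dist_comm, dist_os s _ _ _ this (by omega)]
    simp [dd]

/-! ### Potential -/

/-- Total remaining distance of the weight-1 tokens. -/
def Phi (s : Fin n → Fin m) (π : Equiv.Perm (Option (Fin m))) (f : TokW m n → Vtx m) : ℕ :=
  ∑ t : Fin n ⊕ Fin n, dd (tgtW s π (Sum.inr t)) (f (Sum.inr t))

theorem cost1_eq (f : TokW m n → Vtx m) (e : Vtx m × Vtx m) :
    (∑ t : TokW m n, if f t = e.1 ∨ f t = e.2 then wtW t else 0) =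
      ∑ t : Fin n ⊕ Fin n, if f (Sum.inr t) = e.1 ∨ f (Sum.inr t) = e.2 then 1 else 0 := by
  rw [Fintype.sum_sum_type]
  simp [wtW]

theorem tok_lip {s : Fin n → Fin m} {e : Vtx m × Vtx m} (h : (WGraph s).Adj e.1 e.2)
    (T u : Vtx m) : dd T u ≤ (if u = e.1 ∨ u = e.2 then 1 else 0) + dd T (swapV e u) := by
  have h1 := dd_lip h T
  have h2 := dd_lip h.symm T
  unfold swapV
  grind

theorem Phi_step {s : Fin n → Fin m} (π : Equiv.Perm (Option (Fin m))) {e : Vtx m × Vtx m}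
    (h : (WGraph s).Adj e.1 e.2) (f : TokW m n → Vtx m) :
    Phi s π f ≤ (∑ t : TokW m n, if f t = e.1 ∨ f t = e.2 then wtW t else 0) +
      Phi s π (fun t => swapV e (f t)) := by
  rw [cost1_eq, Phi, Phi, ← Finset.sum_add_distrib]
  exact Finset.sum_le_sum fun t _ => tok_lip h _ _

theorem dd_self (s : Fin n → Fin m) (π : Equiv.Perm (Option (Fin m))) :
    Phi s π (tgtW s π) = 0 := by
  unfold Phi
  apply Finset.sum_eq_zero
  rintro (j | j) - <;> simp [tgtW, dd]

theorem Phi_le_cost {s : Fin n → Fin m} (π : Equiv.Perm (Option (Fin m)))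
    (σ : List (Vtx m × Vtx m)) : ∀ f : TokW m n → Vtx m,
    (∀ e ∈ σ, (WGraph s).Adj e.1 e.2) → applySwaps σ f = tgtW s π →
    Phi s π f ≤ costSeq wtW σ f := by
  induction σ with
  | nil =>
    intro f _ h
    have : f = tgtW s π := h
    rw [this, dd_self]
    exact Nat.zero_le _
  | cons e σ ih =>
    intro f ha h
    have h1 := ih (fun t => swapV e (f t)) (fun e' he' => ha e' (by simp [he'])) h
    have h2 := Phi_step π (ha e (by simp)) f
    simp only [costSeq]
    omega

/-- Invariant of tight swap sequences. -/
structure Inv (s : Fin n → Fin m) (f : TokW m n → Vtx m) : Prop where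
  inj : Function.Injective f
  rng : ∀ v, (∃ t, f t = v) ↔ ∃ t, initW s t = v
  zx : ∀ j, ZX (s j) (cnt s (s j) - 1 - rankOcc s j) (f (Sum.inr (Sum.inl j)))
  zy : ∀ j, ZY (s j) (n - 1 - j.val) (f (Sum.inr (Sum.inr j)))
  xo : ∀ j k, j < k → posO (f (Sum.inr (Sum.inl j))) < posO (f (Sum.inr (Sum.inl k))) ∨
    posO (f (Sum.inr (Sum.inl j))) = -1
  it : Function.Injective (fun o => nk (f (Sum.inl o)))

theorem Inv_init (s : Fin n → Fin m) : Inv s (initW s) where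
  inj := init_inj s
  rng _ := Iff.rfl
  zx j := by simp [initW, ZX]
  zy j := by simp [initW, ZY]
  xo j k h := by
    left
    simp only [initW, posO]
    have : j.val < k.val := h
    omega
  it := by
    have : (fun o => nk (initW s (Sum.inl o : TokW m n))) = id := by
      funext o
      cases o <;> simp [initW, nk]
    rw [this]
    exact Function.injective_id

theorem prefix_exists (P : Fin n → Prop) (h : ∀ j k, j < k → P k → P j) :
    ∃ A : ℕ, ∀ j, P j ↔ j.val < A := by
  classical
  refine ⟨(Finset.univ.filter P).card, fun j => ⟨fun hj => ?_, fun hj => ?_⟩⟩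
  · have h1 : Finset.Iic j ⊆ Finset.univ.filter P := by
      intro k hk
      simp at hk ⊢
      rcases hk.lt_or_eq with h1 | h1
      · exact h k j h1 hj
      · rwa [h1]
    have := Finset.card_le_card h1
    simp at this
    omega
  · by_contra hP
    have h1 : Finset.univ.filter P ⊆ Finset.Iio j := by
      intro k hk
      simp at hk ⊢
      by_contra hc
      push Not at hc
      rcases hc.lt_or_eq with h1 | h1
      · exact hP (h j k h1 hk)
      · exact hP (h1 ▸ hk)
    have := Finset.card_le_card h1
    simp at this
    omega

/-- membership in slot path `i`, as a number -/
def inS (i : Fin m) : Vtx m → ℕ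
  | .slot i' _ => if i' = i then 1 else 0
  | _ => 0

theorem count_inv {s : Fin n → Fin m} {f : TokW m n → Vtx m} (h : Inv s f) (i : Fin m) :
    ∑ t, inS i (f t) = ∑ j, if s j = i then 1 else 0 := by
  have h1 : ∑ t, inS i (f t) = ∑ t, inS i (initW s t) := by
    rw [← Finset.sum_image (s := Finset.univ) (g := f) (f := inS i) (fun a _ b _ hab => h.inj hab),
      ← Finset.sum_image (s := Finset.univ) (g := initW s) (f := inS i)
        (fun a _ b _ hab => init_inj s hab)]
    congr 1
    ext v
    simpa using h.rng v
  rw [h1, Fintype.sum_sum_type, Fintype.sum_sum_type]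
  have : ∀ o, inS i (initW s (Sum.inl o : TokW m n)) = 0 := by
    intro o
    cases o <;> simp [initW, inS]
  simp only [this]
  simp [initW, inS]

/-- The key counting argument: when the free item is at the entrance of slot `i`,
then `i` is the slot of the first `x` token which has not arrived. -/
theorem key {s : Fin n → Fin m} {f : TokW m n → Vtx m} (h : Inv s f)
    (hy : ∀ j k, j < k → posO (f (Sum.inr (Sum.inr k))) < posO (f (Sum.inr (Sum.inr j))) ∨
      posO (f (Sum.inr (Sum.inr k))) = -1)
    (A : ℕ) (hA : ∀ j, posO (f (Sum.inr (Sum.inl j))) = -1 ↔ j.val < A)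
    (i : Fin m) (o : Option (Fin m)) (ho : f (Sum.inl o) = .slot i 0) :
    ∃ hn : A < n, s ⟨A, hn⟩ = i := by
  obtain ⟨J, hJ⟩ := prefix_exists (fun j => posO (f (Sum.inr (Sum.inr j))) ≠ -1) (by
    intro j k hjk hk
    have := posO_ge (f (Sum.inr (Sum.inr k)))
    rcases hy j k hjk with h1 | h1
    · omega
    · exact absurd h1 hk)
  have hx' : ∀ i' j, inS i' (f (Sum.inr (Sum.inl j))) = if s j = i' ∧ j.val < A then 1 else 0 := by
    intro i' j
    have hA := hA j
    have := h.zx j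
    clear ho
    generalize f (Sum.inr (Sum.inl j)) = v at *
    cases v <;> simp [ZX, inS, posO] at * <;> grind
  have hy' : ∀ i' j, inS i' (f (Sum.inr (Sum.inr j))) +
      (if s j = i' ∧ j.val < J then 1 else 0) = if s j = i' then 1 else 0 := by
    intro i' j
    have hJ := hJ j
    have := h.zy j
    clear ho hx'
    generalize f (Sum.inr (Sum.inr j)) = v at *
    cases v <;> simp [ZY, inS, posO] at * <;> grind
  have ho' : ∀ i', ∑ o, inS i' (f (Sum.inl o)) = if i = i' then 1 else 0 := by
    intro i'
    rw [Finset.sum_eq_single o]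
    · rw [ho]; simp [inS]
    · intro b _ hb
      have h1 : nk (f (Sum.inl b)) ≠ nk (f (Sum.inl o)) := fun hc => hb (h.it hc)
      rw [ho] at h1
      generalize f (Sum.inl b) = v at *
      cases v <;> simp [nk, inS] at *
    · simp
  have hc : ∀ i', (if i = i' then 1 else 0) + (∑ j, if s j = i' ∧ j.val < A then 1 else 0)
      = ∑ j : Fin n, if s j = i' ∧ j.val < J then 1 else 0 := by
    intro i'
    have h1 := count_inv h i'
    rw [Fintype.sum_sum_type, Fintype.sum_sum_type, ho'] at h1
    simp only [hx'] at h1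
    simp only [← hy'] at h1
    rw [Finset.sum_add_distrib] at h1
    omega
  have hAJ : A < J ∧ A < n := by
    by_contra hcon
    have h1 := hc i
    rw [if_pos rfl] at h1
    have h2 : (∑ j : Fin n, if s j = i ∧ j.val < J then 1 else 0) ≤
        ∑ j : Fin n, if s j = i ∧ j.val < A then 1 else 0 := by
      apply Finset.sum_le_sum
      intro j _
      have := j.2
      split_ifs with h3 h4 <;> omega
    omega
  refine ⟨hAJ.2, ?_⟩
  by_contra hne
  have h1 := hc (s ⟨A, hAJ.2⟩)
  rw [if_neg (fun h => hne h.symm)] at h1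
  have h2 : (∑ j : Fin n, if s j = s ⟨A, hAJ.2⟩ ∧ j.val < A then 1 else 0) <
      ∑ j : Fin n, if s j = s ⟨A, hAJ.2⟩ ∧ j.val < J then 1 else 0 := by
    apply Finset.sum_lt_sum
    · intro j _
      split_ifs with h3 h4 <;> omega
    · exact ⟨⟨A, hAJ.2⟩, Finset.mem_univ _, by simp [hAJ.1]⟩
  omega

theorem swapV_nonnook {e : Vtx m × Vtx m}
    (hn : nk e.1 = none ∧ nk e.2 = none) (v : Vtx m) : nk (swapV e v) = nk v := by
  unfold swapV
  grind

theorem adj_nook {s : Fin n → Fin m} {u v : Vtx m} (h : (WGraph s).Adj u v) {i : Fin m}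
    (hu : u = .nook i) : v = .slot i 0 := by
  subst hu
  rw [adj_iff] at h
  obtain ⟨-, h⟩ := h
  cases v <;> simp [rel] at h ⊢ <;> grind

theorem edge_cases {s : Fin n → Fin m} {e : Vtx m × Vtx m} (h : (WGraph s).Adj e.1 e.2) :
    (nk e.1 = none ∧ nk e.2 = none) ∨
    ∃ i, ∀ v : Vtx m, swapV e v = swapV (.nook i, .slot i 0) v := by
  obtain ⟨u, v⟩ := e
  by_cases hu : ∃ i, u = .nook i
  · obtain ⟨i, rfl⟩ := hu
    right
    have := adj_nook h rfl
    simp only at this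
    subst this
    exact ⟨i, fun v => rfl⟩
  by_cases hv : ∃ i, v = .nook i
  · obtain ⟨i, rfl⟩ := hv
    right
    have := adj_nook h.symm rfl
    simp only at this
    subst this
    refine ⟨i, fun w => ?_⟩
    unfold swapV
    grind
  · left
    cases u <;> cases v <;> simp [nk] at *

theorem reverse_main {s : Fin n → Fin m} {π : Equiv.Perm (Option (Fin m))}
    (σ : List (Vtx m × Vtx m)) : ∀ f : TokW m n → Vtx m, Inv s f →
    (∀ e ∈ σ, (WGraph s).Adj e.1 e.2) → applySwaps σ f = tgtW s π →
    costSeq wtW σ f ≤ Phi s π f →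
    (∀ j k, j < k → posO (f (Sum.inr (Sum.inr k))) < posO (f (Sum.inr (Sum.inr j))) ∨
      posO (f (Sum.inr (Sum.inr k))) = -1) ∧
    ∀ A : ℕ, (∀ j, posO (f (Sum.inr (Sum.inl j))) = -1 ↔ j.val < A) →
      ∃ τ : List (Fin m), τ.Sublist ((List.ofFn s).drop A) ∧
        starApply τ (fun o => nk (f (Sum.inl o))) = ⇑π := by
  induction σ with
  | nil =>
    intro f _ _ h _
    have : f = tgtW s π := h
    subst this
    constructor
    · intro j k hjk
      left
      have : j.val < k.val := hjk
      simp only [tgtW, posO]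
      omega
    · intro A _
      refine ⟨[], by simp, ?_⟩
      funext o
      simp only [starApply, List.foldl_nil, tgtW]
      cases π o <;> rfl
  | cons e σ ih =>
    intro f hI ha hT hc
    have hadj : (WGraph s).Adj e.1 e.2 := ha e (by simp)
    set f' : TokW m n → Vtx m := fun t => swapV e (f t) with hf'
    have ha' : ∀ e ∈ σ, (WGraph s).Adj e.1 e.2 := fun e' he' => ha e' (by simp [he'])
    have hT' : applySwaps σ f' = tgtW s π := hT
    have hlow := Phi_le_cost π σ f' ha' hT'
    have hstep := Phi_step π hadj f
    simp only [costSeq] at hc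
    have hc' : costSeq wtW σ f' ≤ Phi s π f' := by
      change _ ≤ _ + Phi s π f' at hstep
      change _ + costSeq wtW σ f' ≤ _ at hc
      omega
    -- tightness of every token
    have htok : ∀ t : Fin n ⊕ Fin n, dd (tgtW s π (Sum.inr t)) (f (Sum.inr t)) =
        (if f (Sum.inr t) = e.1 ∨ f (Sum.inr t) = e.2 then 1 else 0) +
          dd (tgtW s π (Sum.inr t)) (f' (Sum.inr t)) := by
      have hsum : (∑ t : Fin n ⊕ Fin n, dd (tgtW s π (Sum.inr t)) (f (Sum.inr t))) =
        ∑ t : Fin n ⊕ Fin n, ((if f (Sum.inr t) = e.1 ∨ f (Sum.inr t) = e.2 then 1 else 0) +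
          dd (tgtW s π (Sum.inr t)) (f' (Sum.inr t))) := by
        rw [Finset.sum_add_distrib, ← cost1_eq]
        change Phi s π f = _ + Phi s π f'
        change _ ≤ _ + Phi s π f' at hstep
        change _ + costSeq wtW σ f' ≤ _ at hc
        omega
      have := (Finset.sum_eq_sum_iff_of_le (fun t _ => tok_lip hadj _ _)).1 hsum
      exact fun t => this t (Finset.mem_univ _)
    have hmove : ∀ t : Fin n ⊕ Fin n, f' (Sum.inr t) = f (Sum.inr t) ∨
        ((WGraph s).Adj (f (Sum.inr t)) (f' (Sum.inr t)) ∧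
          dd (tgtW s π (Sum.inr t)) (f' (Sum.inr t)) + 1 =
            dd (tgtW s π (Sum.inr t)) (f (Sum.inr t))) := by
      intro t
      have h1 := htok t
      by_cases h2 : f (Sum.inr t) = e.1 ∨ f (Sum.inr t) = e.2
      · right
        rw [if_pos h2] at h1
        refine ⟨?_, by omega⟩
        simp only [hf', swapV]
        have h3 := hadj.symm
        have h4 := hadj.ne
        rcases h2 with h2 | h2 <;> rw [h2]
        · simpa using hadj
        · simpa [h4.symm] using h3
      · left
        push Not at h2
        simp [hf', swapV, h2.1, h2.2]
    have hxm : ∀ j, ZX (s j) (cnt s (s j) - 1 - rankOcc s j) (f' (Sum.inr (Sum.inl j))) ∧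
        posO (f' (Sum.inr (Sum.inl j))) ≤ posO (f (Sum.inr (Sum.inl j))) ∧
        posO (f (Sum.inr (Sum.inl j))) - 1 ≤ posO (f' (Sum.inr (Sum.inl j))) := by
      intro j
      rcases hmove (Sum.inl j) with h | ⟨h1, h2⟩
      · rw [h]
        exact ⟨hI.zx j, by omega, by omega⟩
      · exact step_ZX h1 (hI.zx j) h2
    have hym : ∀ j, ZY (s j) (n - 1 - j.val) (f' (Sum.inr (Sum.inr j))) ∧
        posO (f (Sum.inr (Sum.inr j))) ≤ posO (f' (Sum.inr (Sum.inr j))) ∧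
        posO (f' (Sum.inr (Sum.inr j))) - 1 ≤ posO (f (Sum.inr (Sum.inr j))) := by
      intro j
      rcases hmove (Sum.inr j) with h | ⟨h1, h2⟩
      · rw [h]
        exact ⟨hI.zy j, by omega, by omega⟩
      · exact step_ZY h1 (hI.zy j) h2
    have hinj' : Function.Injective f' := (swapV_inj e).comp hI.inj
    have hrng' : ∀ v, (∃ t, f' t = v) ↔ ∃ t, initW s t = v := by
      intro v
      have h1 : (∃ t, f' t = v) ↔ ∃ t, f t = swapV e v := by
        constructor
        · rintro ⟨t, rfl⟩
          exact ⟨t, (swapV_swapV e (f t)).symm⟩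
        · rintro ⟨t, ht⟩
          exact ⟨t, by simp only [hf', ht, swapV_swapV]⟩
      rw [h1, hI.rng]
      obtain ⟨t1, ht1⟩ := adj_mem hadj
      obtain ⟨t2, ht2⟩ := adj_mem hadj.symm
      unfold swapV
      split_ifs with h2 h3
      · rw [h2]; exact ⟨fun _ => ⟨t1, ht1⟩, fun _ => ⟨t2, ht2⟩⟩
      · rw [h3]; exact ⟨fun _ => ⟨t2, ht2⟩, fun _ => ⟨t1, ht1⟩⟩
      · rfl
    have hxo' : ∀ j k, j < k →
        posO (f' (Sum.inr (Sum.inl j))) < posO (f' (Sum.inr (Sum.inl k))) ∨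
        posO (f' (Sum.inr (Sum.inl j))) = -1 := by
      intro j k hjk
      refine step_ord (hI.xo j k hjk) (hxm j).2.1 (hxm k).2.2 ?_
      intro hc
      have := hinj' hc
      simp at this
      omega
    -- items
    have hitem : (∀ o, nk (f' (Sum.inl o)) = nk (f (Sum.inl o))) ∨
        ∃ i o₀, f (Sum.inl o₀) = .slot i 0 ∧
          (∀ j, f' (Sum.inr (Sum.inl j)) = f (Sum.inr (Sum.inl j))) ∧
          ∀ o, nk (f' (Sum.inl o)) =
            swapV ((none : Option (Fin m)), some i) (nk (f (Sum.inl o))) := by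
      rcases edge_cases hadj with h | ⟨i, hi⟩
      · left
        exact fun o => swapV_nonnook h _
      · right
        have hnk1 : ∀ t : Fin n ⊕ Fin n, f (Sum.inr t) ≠ .nook i := by
          rintro (j | j) h
          · have := hI.zx j
            rw [h] at this
            exact this
          · have := hI.zy j
            rw [h] at this
            exact this
        have hnk2 : ∀ t : Fin n ⊕ Fin n, f' (Sum.inr t) ≠ .nook i := by
          rintro (j | j) h
          · have := (hxm j).1
            rw [h] at this
            exact this
          · have := (hym j).1
            rw [h] at this
            exact this
        have hsw : ∀ t, f' t = swapV (.nook i, .slot i 0) (f t) := fun t => hi _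
        have hslot : ∀ t : Fin n ⊕ Fin n, f (Sum.inr t) ≠ .slot i 0 := by
          intro t h
          apply hnk2 t
          rw [hsw, h]
          simp [swapV]
        obtain ⟨t, ht⟩ : ∃ t, f' t = .nook i := (hrng' _).2 ⟨Sum.inl (some i), rfl⟩
        rcases t with o₀ | t
        swap
        · exact absurd ht (hnk2 t)
        have ho₀ : f (Sum.inl o₀) = .slot i 0 := by
          have : swapV (.nook i, .slot i 0) (f' (Sum.inl o₀)) = f (Sum.inl o₀) := by
            rw [hsw, swapV_swapV]
          rw [← this, ht]
          simp [swapV]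
        refine ⟨i, o₀, ho₀, ?_, ?_⟩
        · intro j
          rw [hsw]
          have h1 := hnk1 (Sum.inl j)
          have h2 := hslot (Sum.inl j)
          simp [swapV, h1, h2]
        · intro o
          rw [hsw]
          by_cases ho : o = o₀
          · rw [ho, ho₀]
            simp [swapV, nk]
          · have h1 : nk (f (Sum.inl o)) ≠ nk (f (Sum.inl o₀)) := fun hc => ho (hI.it hc)
            rw [ho₀] at h1
            generalize f (Sum.inl o) = v at h1 ⊢
            cases v with
            | nook i' =>
              by_cases hii : i' = i
              · subst hii
                simp [swapV, nk]
              · simp [swapV, nk, hii]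
            | _ => simp [nk] at h1
    have hI' : Inv s f' := by
      refine ⟨hinj', hrng', fun j => (hxm j).1, fun j => (hym j).1, hxo', ?_⟩
      rcases hitem with h | ⟨i, o₀, -, -, h⟩
      · simp only [h]
        exact hI.it
      · simp only [h]
        exact (swapV_inj _).comp hI.it
    obtain ⟨hy', hτ⟩ := ih f' hI' ha' hT' hc'
    have hy : ∀ j k, j < k → posO (f (Sum.inr (Sum.inr k))) < posO (f (Sum.inr (Sum.inr j))) ∨
        posO (f (Sum.inr (Sum.inr k))) = -1 := by
      intro j k hjk
      refine step_ord (hy' j k hjk) (hym k).2.1 (hym j).2.2 ?_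
      intro hc
      have := hI.inj hc
      simp at this
      omega
    refine ⟨hy, ?_⟩
    intro A hA
    rcases hitem with h | ⟨i, o₀, ho₀, hx, h⟩
    · obtain ⟨A', hA'⟩ := prefix_exists (fun j => posO (f' (Sum.inr (Sum.inl j))) = -1) (by
        intro j k hjk hk
        have := posO_ge (f' (Sum.inr (Sum.inl j)))
        rcases hxo' j k hjk with h1 | h1
        · omega
        · exact h1)
      obtain ⟨τ, h1, h2⟩ := hτ (max A A') (by
        intro j
        rw [hA' j, lt_max_iff]
        refine ⟨Or.inr, ?_⟩
        rintro (h3 | h3)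
        · rw [← hA'] 
          have h4 := (hA j).2 h3
          have h5 := (hxm j).2.1
          have h6 := posO_ge (f' (Sum.inr (Sum.inl j)))
          show posO (f' (Sum.inr (Sum.inl j))) = -1
          omega
        · exact h3)
      refine ⟨τ, h1.trans ?_, ?_⟩
      · exact List.drop_sublist_drop_left _ (le_max_left _ _)
      · rw [← h2]
        simp only [h]
    · obtain ⟨hn, hs⟩ := key hI hy A hA i o₀ ho₀
      obtain ⟨τ, h1, h2⟩ := hτ A (by intro j; rw [hx]; exact hA j)
      have hd : (List.ofFn s).drop A = i :: (List.ofFn s).drop (A + 1) := by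
        rw [List.drop_eq_getElem_cons (by simpa using hn)]
        simp [hs]
      rw [hd] at h1 ⊢
      simp only [h] at h2
      cases h1 with
      | cons _ h1 =>
        exact ⟨i :: τ, h1.cons_cons _, h2⟩
      | cons_cons _ h1 =>
        rename_i τ'
        refine ⟨τ', h1.cons _, ?_⟩
        rw [← h2]
        simp only [starApply, List.foldl_cons, swapV_swapV]

theorem reverse_dir {s : Fin n → Fin m} {π : Equiv.Perm (Option (Fin m))}
    (σ : List (Vtx m × Vtx m)) (ha : ∀ e ∈ σ, (WGraph s).Adj e.1 e.2)
    (hT : applySwaps σ (initW s) = tgtW s π) (hc : costSeq wtW σ (initW s) ≤ KW s π) :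
    StarSTSYes π (List.ofFn s) := by
  rw [KW_eq] at hc
  obtain ⟨-, h⟩ := reverse_main σ (initW s) (Inv_init s) ha hT hc
  obtain ⟨τ, h1, h2⟩ := h 0 (by intro j; simp [initW, posO]; omega)
  refine ⟨τ, by simpa using h1, ?_⟩
  rw [← h2]
  congr 1
  funext o
  cases o <;> simp [initW, nk]

/-! ### Forward direction -/

/-- Image of a vertex under a sequence of swaps. -/
def appV {V : Type*} [DecidableEq V] (σ : List (V × V)) (v : V) : V :=
  σ.foldl (fun v e => swapV e v) v

theorem applySwaps_eq {T V : Type*} [DecidableEq V] (σ : List (V × V)) :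
    ∀ (f : T → V), applySwaps σ f = fun t => appV σ (f t) := by
  induction σ with
  | nil => intro f; rfl
  | cons e σ ih => intro f; exact ih _

theorem appV_append {V : Type*} [DecidableEq V] (σ τ : List (V × V)) (v : V) :
    appV (σ ++ τ) v = appV τ (appV σ v) := by
  simp [appV]

theorem appV_inj {V : Type*} [DecidableEq V] (σ : List (V × V)) :
    Function.Injective (appV σ) := by
  induction σ with
  | nil => exact fun a b h => h
  | cons e σ ih => exact ih.comp (swapV_inj e)

theorem costSeq_append (wt : TokW m n → ℕ) (σ τ : List (Vtx m × Vtx m)) :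
    ∀ f, costSeq wt (σ ++ τ) f = costSeq wt σ f + costSeq wt τ (applySwaps σ f) := by
  induction σ with
  | nil => intro f; simp [costSeq, applySwaps]
  | cons e σ ih =>
    intro f
    simp only [List.cons_append, costSeq, ih]
    rw [add_assoc]
    rfl

/-- Weight located at a vertex. -/
def wv (f : TokW m n → Vtx m) (v : Vtx m) : ℕ := ∑ t, if f t = v then wtW t else 0

theorem cost_le_wv (f : TokW m n → Vtx m) (e : Vtx m × Vtx m) :
    (∑ t : TokW m n, if f t = e.1 ∨ f t = e.2 then wtW t else 0) ≤ wv f e.1 + wv f e.2 := by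
  rw [wv, wv, ← Finset.sum_add_distrib]
  apply Finset.sum_le_sum
  intro t _
  split_ifs <;> first | omega | tauto

theorem wv_eq {f : TokW m n → Vtx m} (hf : Function.Injective f) (t : TokW m n) :
    wv f (f t) = wtW t := by
  unfold wv
  rw [Finset.sum_eq_single t]
  · simp
  · intro b _ hb
    rw [if_neg (fun h => hb (hf h))]
  · simp

theorem wv_le {f : TokW m n → Vtx m} (hf : Function.Injective f) (v : Vtx m) : wv f v ≤ 1 := by
  by_cases h : ∃ t, f t = v
  · obtain ⟨t, rfl⟩ := h
    rw [wv_eq hf]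
    cases t <;> simp [wtW]
  · unfold wv
    rw [Finset.sum_eq_zero]
    · omega
    · intro t _
      rw [if_neg (fun h' => h ⟨t, h'⟩)]

theorem wv_item {f : TokW m n → Vtx m} (hf : Function.Injective f) {v : Vtx m}
    {o : Option (Fin m)} (h : f (Sum.inl o) = v) : wv f v = 0 := by
  rw [← h, wv_eq hf]
  rfl

theorem cost_le_two (σ : List (Vtx m × Vtx m)) : ∀ f : TokW m n → Vtx m,
    Function.Injective f → costSeq wtW σ f ≤ 2 * σ.length := by
  induction σ with
  | nil => intro f _; simp [costSeq]
  | cons e σ ih =>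
    intro f hf
    have h1 := ih (fun t => swapV e (f t)) ((swapV_inj e).comp hf)
    have h2 := cost_le_wv f e
    have h3 := wv_le hf e.1
    have h4 := wv_le hf e.2
    simp only [costSeq, List.length_cons]
    omega

/-- Swaps moving the token at `q 0` to `q k`. -/
def pushL {V : Type*} (q : ℕ → V) (k : ℕ) : List (V × V) :=
  (List.range k).map fun d => (q d, q (d + 1))

theorem pushL_succ {V : Type*} [DecidableEq V] (q : ℕ → V) (k : ℕ) (v : V) :
    appV (pushL q (k + 1)) v = swapV (q k, q (k + 1)) (appV (pushL q k) v) := by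
  unfold pushL
  rw [List.range_succ, List.map_append, appV_append]
  rfl

theorem push_other {V : Type*} [DecidableEq V] (q : ℕ → V) (k : ℕ) (v : V)
    (h : ∀ d ≤ k, v ≠ q d) : appV (pushL q k) v = v := by
  induction k with
  | zero => rfl
  | succ k ih =>
    rw [pushL_succ, ih (fun d hd => h d (by omega))]
    simp [swapV, h k (by omega), h (k + 1) (by omega)]

theorem push_zero {V : Type*} [DecidableEq V] (q : ℕ → V) (k : ℕ) :
    appV (pushL q k) (q 0) = q k := by
  induction k with
  | zero => rfl
  | succ k ih =>
    rw [pushL_succ, ih]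
    simp [swapV]

theorem push_succ {V : Type*} [DecidableEq V] (q : ℕ → V) (hq : Function.Injective q) (k d : ℕ)
    (h : d < k) : appV (pushL q k) (q (d + 1)) = q d := by
  induction k with
  | zero => omega
  | succ k ih =>
    rw [pushL_succ]
    by_cases hd : d = k
    · subst hd
      rw [push_other _ _ _ (fun e he hc => by have := hq hc; omega)]
      have : q (d + 1) ≠ q d := fun hc => by have := hq hc; omega
      simp [swapV, this]
    · rw [ih (by omega)]
      have h1 : q d ≠ q k := fun hc => hd (hq hc)
      have h2 : q d ≠ q (k + 1) := fun hc => by have := hq hc; omega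
      simp [swapV, h1, h2]

/-- The placement after `j` steps with item arrangement `g`. -/
def Pl (s : Fin n → Fin m) (j : ℕ) (g : Option (Fin m) → Option (Fin m)) : TokW m n → Vtx m
  | Sum.inl o => (match g o with | none => .root | some i => .nook i)
  | Sum.inr (Sum.inl k) =>
      if k.val < j then .slot (s k) (cnt s (s k) - 1 - rankOcc s k) else .ord (k.val - j)
  | Sum.inr (Sum.inr k) =>
      if k.val < j then .ord (n - 1 - k.val) else .slot (s k) (rankOcc s k - rk s j (s k))

theorem Pl_zero (s : Fin n → Fin m) : Pl s 0 id = initW s := by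
  funext t
  rcases t with (_ | i) | k | k <;> simp [Pl, initW, rk]

theorem Pl_end (s : Fin n → Fin m) (π : Equiv.Perm (Option (Fin m))) :
    Pl s n π = tgtW s π := by
  funext t
  rcases t with o | k | k <;> simp [Pl, tgtW]

/-- Exchange of `x_j` and `y_j`, with an optional item swap. -/
def mid (b : Bool) (i : Fin m) : List (Vtx m × Vtx m) :=
  [(.root, .slot i 0)] ++ ((if b then [(.slot i 0, .nook i)] else []) ++
    [(.root, .ord 0), (.root, .slot i 0)])

/-- Optional star swap. -/
def osw (b : Bool) (i : Fin m) (o : Option (Fin m)) : Option (Fin m) :=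
  if b then swapV (none, some i) o else o

/-- embedding of star vertices -/
def emb : Option (Fin m) → Vtx m
  | none => .root
  | some i => .nook i

theorem mid_emb (b : Bool) (i : Fin m) (o : Option (Fin m)) :
    appV (mid b i) (emb o) = emb (osw b i o) := by
  cases b <;> cases o <;> simp [mid, appV, emb, osw, swapV]
  split_ifs <;> simp_all

theorem mid_slot0 (b : Bool) (i : Fin m) : appV (mid b i) (.slot i 0) = .ord 0 := by
  cases b <;> simp [mid, appV, swapV]

theorem mid_ord0 (b : Bool) (i : Fin m) : appV (mid b i) (.ord 0) = .slot i 0 := by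
  cases b <;> simp [mid, appV, swapV]

theorem mid_slot (b : Bool) (i i' : Fin m) (d : ℕ) (h : ¬ (i' = i ∧ d = 0)) :
    appV (mid b i) (.slot i' d) = .slot i' d := by
  cases b <;> simp [mid, appV, swapV, h]

theorem mid_ord (b : Bool) (i : Fin m) (d : ℕ) (h : d ≠ 0) :
    appV (mid b i) (.ord d) = .ord d := by
  cases b <;> simp [mid, appV, swapV, h]

/-- All swaps of step `j`. -/
def stepL (s : Fin n → Fin m) (b : Bool) (j : Fin n) : List (Vtx m × Vtx m) :=
  mid b (s j) ++ (pushL .ord (n - 1 - j.val) ++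
    pushL (.slot (s j)) (cnt s (s j) - 1 - rankOcc s j))

theorem stepL_apply (s : Fin n → Fin m) (b : Bool) (j : Fin n)
    (g : Option (Fin m) → Option (Fin m)) :
    applySwaps (stepL s b j) (Pl s j.val g) = Pl s (j.val + 1) (fun o => osw b (s j) (g o)) := by
  have hso : Function.Injective (fun d => Vtx.slot (s j) d) := fun a b h => by simpa using h
  have hoo : Function.Injective (fun d => (Vtx.ord d : Vtx m)) := fun a b h => by simpa using h
  have hrj := rank_lt_cnt s j
  rw [applySwaps_eq]
  funext t
  simp only [stepL, appV_append]
  rcases t with o | k | k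
  · have : ∀ j g, Pl s j g (Sum.inl o) = emb (g o) := by
      intro j g
      simp only [Pl]
      cases g o <;> rfl
    rw [this, this, mid_emb]
    generalize osw b (s j) (g o) = o'
    rw [push_other _ _ (emb o') (by intro d _; cases o' <;> simp [emb])]
    rw [push_other _ _ (emb o') (by intro d _; cases o' <;> simp [emb])]
  · have hrk := rank_lt_cnt s k
    simp only [Pl]
    rcases lt_trichotomy k j with h | h | h
    · have h' : k.val < j.val := h
      rw [if_pos h', if_pos (by omega)]
      have hlt : s k = s j → cnt s (s j) - 1 - rankOcc s j < cnt s (s k) - 1 - rankOcc s k := by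
        intro hs
        have h1 := rank_lt_of_lt s h hs
        rw [hs]
        omega
      rw [mid_slot _ _ _ _ (by rintro ⟨h1, h2⟩; have := hlt h1; omega)]
      rw [push_other _ _ (Vtx.slot _ _) (by intro d _; simp)]
      rw [push_other _ _ (Vtx.slot _ _)]
      intro d hd hc
      simp only [Vtx.slot.injEq] at hc
      have := hlt hc.1
      omega
    · subst h
      rw [if_neg (by omega), if_pos (by omega), Nat.sub_self, mid_ord0]
      rw [push_other _ _ (Vtx.slot _ _) (by intro d _; simp)]
      exact push_zero _ _
    · have h' : j.val < k.val := h
      have := k.2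
      rw [if_neg (by omega), if_neg (by omega), mid_ord _ _ _ (by omega)]
      obtain ⟨d, hd⟩ : ∃ d, k.val - j.val = d + 1 := ⟨k.val - j.val - 1, by omega⟩
      have hd2 : k.val - (j.val + 1) = d := by omega
      rw [hd, hd2]
      rw [push_succ Vtx.ord hoo _ _ (by omega)]
      rw [push_other _ _ (Vtx.ord _) (by intro d _; simp)]
  · have hrk := rank_lt_cnt s k
    simp only [Pl]
    rcases lt_trichotomy k j with h | h | h
    · have h' : k.val < j.val := h
      have := j.2
      rw [if_pos h', if_pos (by omega), mid_ord _ _ _ (by omega)]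
      rw [push_other _ _ (Vtx.ord _) (by
        intro d hd hc
        simp only [Vtx.ord.injEq] at hc
        omega)]
      rw [push_other _ _ (Vtx.ord _) (by intro d _; simp)]
    · subst h
      rw [if_neg (by omega), if_pos (by omega), rankOcc_eq, Nat.sub_self, mid_slot0, push_zero]
      rw [push_other _ _ (Vtx.ord _) (by intro d _; simp)]
    · have h' : j.val < k.val := h
      rw [if_neg (by omega), if_neg (by omega), rk_succ]
      by_cases hs : s j = s k
      · have h1 := rank_lt_of_lt s h hs
        have h2 : rk s j.val (s k) = rankOcc s j := by rw [rankOcc_eq, hs]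
        rw [if_pos hs, h2, ← hs, mid_slot _ _ _ _ (by omega)]
        rw [push_other _ _ (Vtx.slot _ _) (by intro d _; simp)]
        obtain ⟨d, hd⟩ : ∃ d, rankOcc s k - rankOcc s j = d + 1 :=
          ⟨rankOcc s k - rankOcc s j - 1, by omega⟩
        have hd2 : rankOcc s k - (rankOcc s j + 1) = d := by omega
        rw [hd, hd2]
        rw [← hs] at hrk
        rw [push_succ (Vtx.slot (s j)) hso _ _ (by omega)]
      · rw [if_neg hs, add_zero, mid_slot _ _ _ _ (by rintro ⟨h1, -⟩; exact hs h1.symm)]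
        rw [push_other _ _ (Vtx.slot _ _) (by intro d _; simp)]
        rw [push_other _ _ (Vtx.slot _ _) (by
          intro d _ hc
          simp only [Vtx.slot.injEq] at hc
          exact hs hc.1.symm)]

theorem stepL_adj (s : Fin n → Fin m) (b : Bool) (j : Fin n) :
    ∀ e ∈ stepL s b j, (WGraph s).Adj e.1 e.2 := by
  have hrj := rank_lt_cnt s j
  have hn := j.2
  have h1 : (WGraph s).Adj .root (.slot (s j) 0) := by rw [adj_iff]; simp [rel]; omega
  have h2 : (WGraph s).Adj .root (.ord 0) := by rw [adj_iff]; simp [rel]; omega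
  have h3 : (WGraph s).Adj (.slot (s j) 0) (.nook (s j)) := by rw [adj_iff]; simp [rel]; omega
  intro e he
  simp only [stepL, mid, pushL, List.mem_append, List.mem_map, List.mem_range] at he
  rcases he with (he | he | he) | ⟨d, hd, rfl⟩ | ⟨d, hd, rfl⟩
  · simp at he; subst he; exact h1
  · cases b <;> simp at he
    subst he; exact h3
  · simp at he
    rcases he with rfl | rfl
    · exact h2
    · exact h1
  · rw [adj_iff]; simp [rel]; omega
  · rw [adj_iff]; simp [rel]; omega

theorem mid_cost (b : Bool) (i : Fin m) (f : TokW m n → Vtx m)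
    (hf : Function.Injective f) (o o' : Option (Fin m)) (ho : f (Sum.inl o) = .root)
    (ho' : f (Sum.inl o') = .nook i) : costSeq wtW (mid b i) f ≤ 4 := by
  have key : ∀ (e : Vtx m × Vtx m) (g : TokW m n → Vtx m), Function.Injective g →
      Function.Injective (fun t => swapV e (g t)) := fun e g hg => (swapV_inj e).comp hg
  cases b
  · have e : mid false i = [(.root, .slot i 0), (.root, .ord 0), (.root, .slot i 0)] := rfl
    rw [e]
    simp only [costSeq]
    have i1 := key (.root, .slot i 0) f hf
    have i2 := key (.root, .ord 0) _ i1
    have c1 := cost_le_wv f (.root, .slot i 0)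
    have c2 := cost_le_wv (fun t => swapV (.root, .slot i 0) (f t)) (.root, .ord 0)
    have c3 := cost_le_wv (fun t => swapV (.root, .ord 0) (swapV (.root, .slot i 0) (f t)))
      (.root, .slot i 0)
    have a1 := wv_item hf ho
    have a1' := wv_le hf (.slot i 0)
    have a2 := wv_le i1 .root
    have a2' := wv_le i1 (.ord 0)
    have a3 := wv_item i2 (v := .slot i 0) (o := o) (by simp [ho, swapV])
    have a3' := wv_le i2 .root
    simp only at c1 c2 c3
    omega
  · have e : mid true i = [(.root, .slot i 0), (.slot i 0, .nook i), (.root, .ord 0),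
      (.root, .slot i 0)] := rfl
    rw [e]
    simp only [costSeq]
    have i1 := key (.root, .slot i 0) f hf
    have i2 := key (.slot i 0, .nook i) _ i1
    have i3 := key (.root, .ord 0) _ i2
    have c1 := cost_le_wv f (.root, .slot i 0)
    have c2 := cost_le_wv (fun t => swapV (.root, .slot i 0) (f t)) (.slot i 0, .nook i)
    have c3 := cost_le_wv (fun t => swapV (.slot i 0, .nook i) (swapV (.root, .slot i 0) (f t)))
      (.root, .ord 0)
    have c4 := cost_le_wv (fun t => swapV (.root, .ord 0) (swapV (.slot i 0, .nook i)
      (swapV (.root, .slot i 0) (f t)))) (.root, .slot i 0)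
    have a1 := wv_item hf ho
    have a1' := wv_le hf (.slot i 0)
    have a2 := wv_item i1 (v := .slot i 0) (o := o) (by simp [ho, swapV])
    have a2' := wv_item i1 (v := .nook i) (o := o') (by simp [ho', swapV])
    have a3 := wv_le i2 .root
    have a3' := wv_le i2 (.ord 0)
    have a4 := wv_item i3 (v := .slot i 0) (o := o') (by simp [ho', swapV])
    have a4' := wv_le i3 .root
    simp only at c1 c2 c3 c4
    omega

/-- Cost bound for step `j`. -/
def stepC (s : Fin n → Fin m) (j : Fin n) : ℕ :=
  4 + 2 * (n - 1 - j.val) + 2 * (cnt s (s j) - 1 - rankOcc s j)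

theorem stepL_cost (s : Fin n → Fin m) (b : Bool) (j : Fin n)
    (g : Option (Fin m) → Option (Fin m)) (hg : Function.Surjective g)
    (hf : Function.Injective (Pl s j.val g)) :
    costSeq wtW (stepL s b j) (Pl s j.val g) ≤ stepC s j := by
  obtain ⟨o, ho⟩ := hg none
  obtain ⟨o', ho'⟩ := hg (some (s j))
  have h1 := mid_cost b (s j) (Pl s j.val g) hf o o' (by simp [Pl, ho]) (by simp [Pl, ho'])
  have h2 := cost_le_two (pushL .ord (n - 1 - j.val) ++
    pushL (.slot (s j)) (cnt s (s j) - 1 - rankOcc s j)) (applySwaps (mid b (s j)) (Pl s j.val g))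
    (by rw [applySwaps_eq]; exact (appV_inj _).comp hf)
  simp only [stepL, costSeq_append wtW (mid b (s j))]
  simp only [List.length_append, pushL, List.length_map, List.length_range] at h2
  simp only [stepC, pushL]
  omega

theorem forward_main (s : Fin n → Fin m) (r : ℕ) : ∀ (j : ℕ), j + r = n →
    ∀ (g : Option (Fin m) → Option (Fin m)), Function.Surjective g →
    Function.Injective (Pl s j g) →
    ∀ τ : List (Fin m), τ.Sublist ((List.ofFn s).drop j) →
    ∃ σ : List (Vtx m × Vtx m), (∀ e ∈ σ, (WGraph s).Adj e.1 e.2) ∧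
      applySwaps σ (Pl s j g) = Pl s n (starApply τ g) ∧
      costSeq wtW σ (Pl s j g) ≤ ∑ k : Fin n, if j ≤ k.val then stepC s k else 0 := by
  induction r with
  | zero =>
    intro j hj g _ _ τ hτ
    have : j = n := by omega
    subst this
    rw [List.drop_eq_nil_of_le (by simp)] at hτ
    have := List.sublist_nil.1 hτ
    subst this
    exact ⟨[], by simp, rfl, by simp [costSeq]⟩
  | succ r ih =>
    intro j hj g hg hf τ hτ
    have hjn : j < n := by omega
    rw [List.drop_eq_getElem_cons (by simpa using hjn)] at hτ
    simp only [List.getElem_ofFn] at hτ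
    obtain ⟨b, τ', hτ', hst⟩ : ∃ (b : Bool) (τ' : List (Fin m)),
        τ'.Sublist ((List.ofFn s).drop (j + 1)) ∧
        starApply τ g = starApply τ' (fun o => osw b (s ⟨j, hjn⟩) (g o)) := by
      cases hτ with
      | cons _ h => exact ⟨false, τ, h, by simp [osw]⟩
      | cons_cons _ h => exact ⟨true, _, h, by simp [osw, starApply]⟩
    have hap := stepL_apply s b ⟨j, hjn⟩ g
    have hco := stepL_cost s b ⟨j, hjn⟩ g hg hf
    simp only at hap hco
    obtain ⟨σ, h1, h2, h3⟩ := ih (j + 1) (by omega) (fun o => osw b (s ⟨j, hjn⟩) (g o)) (by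
        intro o
        cases b
        · exact hg o
        · obtain ⟨o', ho'⟩ := hg (swapV (none, some (s ⟨j, hjn⟩)) o)
          exact ⟨o', by simp [osw, ho', swapV_swapV]⟩)
      (by rw [← hap, applySwaps_eq]; exact (appV_inj _).comp hf) τ' hτ'
    refine ⟨stepL s b ⟨j, hjn⟩ ++ σ, ?_, ?_, ?_⟩
    · intro e he
      rcases List.mem_append.1 he with he | he
      · exact stepL_adj s b _ e he
      · exact h1 e he
    · rw [hst, ← h2, ← hap]
      simp [applySwaps]
    · rw [costSeq_append, hap]
      have hsum : (∑ k : Fin n, if j ≤ k.val then stepC s k else 0) =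
          stepC s ⟨j, hjn⟩ + ∑ k : Fin n, if j + 1 ≤ k.val then stepC s k else 0 := by
        have : stepC s ⟨j, hjn⟩ = ∑ k : Fin n, if k = ⟨j, hjn⟩ then stepC s k else 0 := by simp
        rw [this, ← Finset.sum_add_distrib]
        apply Finset.sum_congr rfl
        intro k _
        simp only [Fin.ext_iff]
        split_ifs <;> omega
      rw [hsum]
      omega

theorem sum_rank (s : Fin n → Fin m) :
    ∑ j, (cnt s (s j) - 1 - rankOcc s j) = ∑ j, rankOcc s j := by
  have h1 : ∀ j, cnt s (s j) - 1 - rankOcc s j =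
      ∑ k : Fin n, if s k = s j ∧ j.val < k.val then 1 else 0 := by
    intro j
    have h2 : cnt s (s j) = rankOcc s j + 1 +
        ∑ k : Fin n, if s k = s j ∧ j.val < k.val then 1 else 0 := by
      have h3 : 1 = ∑ k : Fin n, if k = j then 1 else 0 := by simp
      rw [cnt, rankOcc, Finset.card_filter, Finset.card_filter]
      conv_rhs => enter [1, 2]; rw [h3]
      rw [← Finset.sum_add_distrib, ← Finset.sum_add_distrib]
      apply Finset.sum_congr rfl
      intro k _
      by_cases hk : k = j
      · subst hk; simp
      · have : k.val ≠ j.val := fun h => hk (Fin.ext h)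
        by_cases hs : s k = s j <;> simp [hk, hs]
        split_ifs <;> omega
    omega
  simp only [h1]
  rw [Finset.sum_comm]
  apply Finset.sum_congr rfl
  intro j _
  rw [rankOcc, Finset.card_filter]
  apply Finset.sum_congr rfl
  intro k _
  simp only [eq_comm]

theorem sum_stepC (s : Fin n → Fin m) (π : Equiv.Perm (Option (Fin m))) :
    ∑ j, stepC s j ≤ KW s π := by
  rw [KW_eq, Fintype.sum_sum_type]
  have h1 := sum_rank s
  have h2 : ∑ j : Fin n, (n - 1 - j.val) = ∑ j : Fin n, j.val := by
    rw [← Equiv.sum_comp Fin.revPerm (fun j : Fin n => j.val)]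
    apply Finset.sum_congr rfl
    intro j _
    simp [Fin.val_rev]
    omega
  simp only [stepC, tgtW, initW, dd, Finset.sum_add_distrib, ← Finset.mul_sum]
  rw [h1, h2]
  simp
  omega

theorem forward_dir {s : Fin n → Fin m} {π : Equiv.Perm (Option (Fin m))}
    (h : StarSTSYes π (List.ofFn s)) :
    ∃ σ : List (Vtx m × Vtx m),
        (∀ e ∈ σ, (WGraph s).Adj e.1 e.2) ∧
        applySwaps σ (initW s) = tgtW s π ∧
        costSeq wtW σ (initW s) ≤ KW s π := by
  obtain ⟨τ, hτ, hπ⟩ := h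
  obtain ⟨σ, h1, h2, h3⟩ := forward_main s n 0 (by omega) id Function.surjective_id
    (by rw [Pl_zero]; exact init_inj s) τ (by simpa using hτ)
  rw [Pl_zero] at h2 h3
  rw [hπ, Pl_end] at h2
  refine ⟨σ, h1, h2, h3.trans ?_⟩
  simpa using sum_stepC s π

theorem starSTS_iff_weightedTokenSwapping (s : Fin n → Fin m)
    (π : Equiv.Perm (Option (Fin m)))
    (hocc : ∀ i : Fin m, ∃ j, s j = i)
    (hcons : ∀ (j : Fin n) (h : j.val + 1 < n), s j ≠ s ⟨j.val + 1, h⟩) :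
    StarSTSYes π (List.ofFn s) ↔
      ∃ σ : List (Vtx m × Vtx m),
        (∀ e ∈ σ, (WGraph s).Adj e.1 e.2) ∧
        applySwaps σ (initW s) = tgtW s π ∧
        costSeq wtW σ (initW s) ≤ KW s π := by
  exact ⟨forward_dir, fun ⟨σ, h1, h2, h3⟩ => reverse_dir σ h1 h2 h3⟩

end Stmt2
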